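/- arXiv:1812.11299 — 6 statements merged into one kernel-verified Lean document; each statement's English description precedes it below -/
import Mathlib

section
/- Let (p_n)_{n≥1} be a Schauder decomposition of a complex Banach space X which is NOT R-Schauder. Then there exists a nondecreasing sequence (a_n)_{n≥1} of positive real numbers with a_n → ∞ such that, setting b_n = a_n^{-1} and letting B = M_b ∈ B(X) be the associated multiplier operator, the set {exp(−tB) : t ≥ 0} of bounded operators on X is not R-bounded. -/
open Filter Topology NormedSpace

/-- Average over all sign vectors `(ε_1,…,ε_k) ∈ {−1,1}^k` of `‖∑_j ε_j v_j‖`. -/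
noncomputable def signAvg {X : Type*} [NormedAddCommGroup X] [NormedSpace ℂ X]
    (k : ℕ) (v : Fin k → X) : ℝ :=
  (2 ^ k : ℝ)⁻¹ * ∑ ε : Fin k → Bool, ‖∑ j : Fin k, (if ε j then (1 : ℝ) else -1) • v j‖

/-- A set of bounded operators on `X` is `R`-bounded. -/
def IsRBounded {X : Type*} [NormedAddCommGroup X] [NormedSpace ℂ X]
    (F : Set (X →L[ℂ] X)) : Prop :=
  ∃ C : ℝ, 0 ≤ C ∧ ∀ (k : ℕ) (T : Fin k → X →L[ℂ] X) (x : Fin k → X),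
    (∀ j, T j ∈ F) → signAvg k (fun j => (T j) (x j)) ≤ C * signAvg k x

/-- `(p n)` is a Schauder decomposition of `X`: the `p n` are pairwise "orthogonal"
bounded projections whose partial sums converge pointwise to the identity.
(Indexing starts at `0`, corresponding to `n = 1` in the classical notation.) -/
def IsSchauderDecomposition {X : Type*} [NormedAddCommGroup X] [NormedSpace ℂ X]
    (p : ℕ → X →L[ℂ] X) : Prop :=
  (∀ n, (p n).comp (p n) = p n) ∧
  (∀ m n, m ≠ n → (p m).comp (p n) = 0) ∧
  (∀ x : X, Tendsto (fun N => ∑ n ∈ Finset.range N, p n x) atTop (nhds x))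

/-- The partial sum projection `P_N = ∑_{n<N} p_n`. -/
noncomputable def partialSum {X : Type*} [NormedAddCommGroup X] [NormedSpace ℂ X]
    (p : ℕ → X →L[ℂ] X) (N : ℕ) : X →L[ℂ] X :=
  ∑ n ∈ Finset.range N, p n


theorem aux_signAvg_add {X : Type*} [NormedAddCommGroup X] [NormedSpace ℂ X]
    (k : ℕ) (v w : Fin k → X) : signAvg k (fun j => v j + w j) ≤ signAvg k v + signAvg k w := by
  unfold signAvg
  rw [← mul_add, ← Finset.sum_add_distrib]
  gcongr with ε
  simp only [smul_add, Finset.sum_add_distrib]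
  exact norm_add_le _ _

theorem aux_signAvg_neg {X : Type*} [NormedAddCommGroup X] [NormedSpace ℂ X]
    (k : ℕ) (v : Fin k → X) : signAvg k (fun j => - v j) = signAvg k v := by
  unfold signAvg
  simp only [smul_neg, Finset.sum_neg_distrib, norm_neg]

theorem aux_signAvg_nonneg {X : Type*} [NormedAddCommGroup X] [NormedSpace ℂ X]
    (k : ℕ) (v : Fin k → X) : 0 ≤ signAvg k v := by
  unfold signAvg
  positivity

theorem aux_signAvg_op {X : Type*} [NormedAddCommGroup X] [NormedSpace ℂ X]
    (k : ℕ) (D : X →L[ℂ] X) (v : Fin k → X) :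
    signAvg k (fun j => D (v j)) ≤ ‖D‖ * signAvg k v := by
  unfold signAvg
  rw [mul_left_comm, Finset.mul_sum _ _ ‖D‖]
  gcongr with ε
  have : ∑ j : Fin k, (if ε j then (1 : ℝ) else -1) • D (v j)
      = D (∑ j : Fin k, (if ε j then (1 : ℝ) else -1) • v j) := by
    rw [map_sum]
    refine Finset.sum_congr rfl fun j _ => ?_
    split_ifs <;> simp
  rw [this]
  exact D.le_opNorm _

theorem aux_signAvg_flip {X : Type*} [NormedAddCommGroup X] [NormedSpace ℂ X]
    (k : ℕ) (J : Fin k → Prop) [DecidablePred J] (v : Fin k → X) :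
    signAvg k (fun j => if J j then v j else - v j) = signAvg k v := by
  unfold signAvg
  congr 1
  let σ : (Fin k → Bool) → (Fin k → Bool) := fun ε j => if J j then ε j else !(ε j)
  have hσ : Function.Involutive σ := by
    intro ε
    funext j
    simp only [σ]
    split_ifs <;> simp
  refine Fintype.sum_equiv hσ.toPerm _ _ fun ε => ?_
  congr 1
  refine Finset.sum_congr rfl fun j _ => ?_
  simp only [Function.Involutive.coe_toPerm, σ]
  by_cases hJ : J j <;> by_cases hε : ε j = true <;> simp [hJ, hε]

theorem aux_signAvg_restrict {X : Type*} [NormedAddCommGroup X] [NormedSpace ℂ X]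
    (k : ℕ) (J : Fin k → Prop) [DecidablePred J] (v : Fin k → X) :
    signAvg k (fun j => if J j then v j else 0) ≤ signAvg k v := by
  have h1 := aux_signAvg_add k v (fun j => if J j then v j else - v j)
  rw [aux_signAvg_flip] at h1
  have h2 : signAvg k (fun j => v j + if J j then v j else - v j)
      = 2 * signAvg k (fun j => if J j then v j else 0) := by
    unfold signAvg
    rw [mul_left_comm, Finset.mul_sum _ _ (2:ℝ)]
    congr 1
    refine Finset.sum_congr rfl fun ε _ => ?_
    have h2n : ∀ z : X, 2 * ‖z‖ = ‖(2:ℝ) • z‖ := fun z => by rw [norm_smul]; simp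
    rw [h2n, Finset.smul_sum]
    congr 1
    refine Finset.sum_congr rfl fun j _ => ?_
    by_cases hJ : J j
    · simp only [hJ, if_true]
      rw [← two_smul ℝ (v j), smul_comm]
    · simp [hJ]
  linarith

theorem aux_signAvg_sum {X : Type*} [NormedAddCommGroup X] [NormedSpace ℂ X]
    (k : ℕ) {ι : Type*} (s : Finset ι) (v : ι → Fin k → X) :
    signAvg k (fun j => ∑ i ∈ s, v i j) ≤ ∑ i ∈ s, signAvg k (v i) := by
  classical
  induction s using Finset.induction_on with
  | empty => simp [signAvg]
  | insert a s ha ih =>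
    simp only [Finset.sum_insert ha]
    exact (aux_signAvg_add k _ _).trans (by gcongr)

theorem aux_signAvg_diag {X : Type*} [NormedAddCommGroup X] [NormedSpace ℂ X]
    (D : ℕ → X →L[ℂ] X) (C : ℝ) (hC : ∀ N, ‖D N‖ ≤ C * (1/2)^N)
    (k : ℕ) (n : Fin k → ℕ) (x : Fin k → X) :
    signAvg k (fun j => D (n j) (x j)) ≤ (2 * C) * signAvg k x := by
  classical
  have hC0 : 0 ≤ C := by have := hC 0; simp at this; exact (norm_nonneg _).trans this
  have h1 : (fun j => D (n j) (x j)) =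
      fun j => ∑ N ∈ Finset.univ.image n, D N (if n j = N then x j else 0) := by
    funext j
    rw [Finset.sum_eq_single (n j)]
    · simp
    · intro b _ hb
      simp [hb.symm]
    · intro h
      simp at h
  rw [h1]
  refine (aux_signAvg_sum k _ (fun N j => D N (if n j = N then x j else 0))).trans ?_
  calc _ ≤ ∑ N ∈ Finset.univ.image n, (C * (1/2)^N) * signAvg k x := by
        refine Finset.sum_le_sum fun N _ => ?_
        refine (aux_signAvg_op k (D N) _).trans ?_
        have := aux_signAvg_restrict k (fun j => n j = N) x
        have h0 := aux_signAvg_nonneg k x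
        calc _ ≤ ‖D N‖ * signAvg k x := by gcongr
          _ ≤ _ := by gcongr; exact hC N
    _ ≤ _ := by
        rw [← Finset.sum_mul, ← Finset.mul_sum, mul_comm 2 C]
        have h0 := aux_signAvg_nonneg k x
        gcongr
        exact (summable_geometric_two.sum_le_tsum _ (fun _ _ => by positivity)).trans_eq
          tsum_geometric_two

theorem aux_exp_eigen {X : Type*} [NormedAddCommGroup X] [NormedSpace ℂ X] [CompleteSpace X]
    (A : X →L[ℂ] X) (c : ℂ) (v : X) (h : A v = c • v) :
    (exp A) v = Complex.exp c • v := by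
  have hpow : ∀ n : ℕ, (A ^ n) v = c ^ n • v := by
    intro n
    induction n with
    | zero => simp
    | succ n ih =>
      rw [pow_succ', mul_apply_eq_comp, ih, map_smul, h, smul_smul, pow_succ]
  have h1 := NormedSpace.exp_series_hasSum_exp' (𝕂 := ℂ) A
  have h2 := h1.mapL (ContinuousLinearMap.apply ℂ X v)
  have h3 := NormedSpace.exp_series_hasSum_exp' (𝕂 := ℂ) c
  have h4 := h3.smul_const v
  rw [Complex.exp_eq_exp_ℂ]
  refine h2.unique ?_
  convert h4 using 2 with n
  simp [hpow, smul_smul]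

theorem aux_bound {X : Type*} [NormedAddCommGroup X] [NormedSpace ℂ X] [CompleteSpace X]
    (p : ℕ → X →L[ℂ] X) (hp : IsSchauderDecomposition p) :
    ∃ K : ℝ, 0 ≤ K ∧ ∀ n, ‖p n‖ ≤ K := by
  obtain ⟨K, hK⟩ := banach_steinhaus (g := p) (by
    intro x
    have h := hp.2.2 x
    have h' := ((tendsto_add_atTop_iff_nat 1).2 h).sub h
    simp only [Finset.sum_range_succ, add_sub_cancel_left] at h'
    obtain ⟨C, hC⟩ := (Metric.isBounded_range_of_tendsto _ h').exists_norm_le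
    exact ⟨C, fun n => hC _ ⟨n, rfl⟩⟩)
  exact ⟨K, (norm_nonneg _).trans (hK 0), hK⟩

/-- the coefficient estimate -/
theorem aux_coef (N n : ℕ) :
    ‖Complex.exp (-(((2:ℝ)^(2*N^2+2*N+1) : ℝ) : ℂ) * ((((2:ℝ)^(2*n^2))⁻¹ : ℝ) : ℂ)) - 1
      + (if n < N + 1 then 1 else 0)‖ ≤ (1/2)^N * (1/2)^n := by
  set y : ℝ := (2:ℝ)^(2*N^2+2*N+1) * ((2:ℝ)^(2*n^2))⁻¹ with hy
  have hy0 : 0 < y := by positivity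
  have e : Complex.exp (-(((2:ℝ)^(2*N^2+2*N+1) : ℝ) : ℂ) * ((((2:ℝ)^(2*n^2))⁻¹ : ℝ) : ℂ))
      = ((Real.exp (-y) : ℝ) : ℂ) := by
    rw [Complex.ofReal_exp, hy]; push_cast; ring_nf
  rw [e]
  have hpw : ((1:ℝ)/2)^N * (1/2)^n = ((2:ℝ)^(N+n))⁻¹ := by
    rw [← pow_add, one_div, inv_pow]
  rw [hpw]
  split_ifs with h
  · rw [sub_add_cancel, Complex.norm_real, Real.norm_eq_abs, abs_of_pos (Real.exp_pos _),
      Real.exp_neg]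
    have h2 : (2:ℝ)^(N+n) ≤ y := by
      rw [hy, ← div_eq_mul_inv, le_div_iff₀ (by positivity), ← pow_add]
      apply pow_le_pow_right₀ (by norm_num)
      have : n ≤ N := by omega
      nlinarith
    have h3 := Real.add_one_le_exp y
    gcongr
    linarith
  · rw [add_zero, ← Complex.ofReal_one, ← Complex.ofReal_sub, Complex.norm_real, Real.norm_eq_abs]
    have h3 := Real.add_one_le_exp (-y)
    have h4 : Real.exp (-y) ≤ 1 := Real.exp_le_one_iff.2 (by linarith)
    rw [abs_of_nonpos (by linarith)]
    have h2 : y ≤ ((2:ℝ)^(N+n))⁻¹ := by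
      rw [hy, ← div_eq_mul_inv, div_le_iff₀ (by positivity), inv_mul_eq_div,
        le_div_iff₀ (by positivity), ← pow_add]
      apply pow_le_pow_right₀ (by norm_num)
      obtain ⟨k, rfl⟩ : ∃ k, n = N + 1 + k := ⟨n - (N+1), by omega⟩
      nlinarith [Nat.zero_le (N*k), Nat.zero_le (k^2)]
    linarith

theorem statement0 {X : Type*} [NormedAddCommGroup X] [NormedSpace ℂ X] [CompleteSpace X]
    (p : ℕ → X →L[ℂ] X) (hp : IsSchauderDecomposition p)
    (hnotR : ¬ IsRBounded (Set.range fun N : ℕ => partialSum p (N + 1))) :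
    ∃ a : ℕ → ℝ, Monotone a ∧ (∀ n, 0 < a n) ∧ Tendsto a atTop atTop ∧
      ∃ B : X →L[ℂ] X,
        (∀ x : X, Tendsto (fun N => ∑ n ∈ Finset.range N, (((a n)⁻¹ : ℝ) : ℂ) • p n x)
          atTop (nhds (B x))) ∧
        ¬ IsRBounded {S : X →L[ℂ] X | ∃ t : ℝ, 0 ≤ t ∧ S = exp (-((t : ℂ) • B))} := by
  obtain ⟨K, hK0, hK⟩ := aux_bound p hp
  have hage : ∀ n : ℕ, (2:ℝ)^n ≤ (2:ℝ)^(2*n^2) := fun n =>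
    pow_le_pow_right₀ (by norm_num) (by nlinarith [Nat.le_self_pow two_ne_zero n])
  have hsum : Summable (fun n : ℕ => ((((2:ℝ)^(2*n^2))⁻¹ : ℝ) : ℂ) • p n) := by
    refine Summable.of_norm_bounded (g := fun n : ℕ => (1/2:ℝ)^n * K)
      (summable_geometric_two.mul_right K) fun n => ?_
    rw [norm_smul, Complex.norm_real, Real.norm_eq_abs, abs_of_pos (by positivity)]
    gcongr
    · rw [one_div, inv_pow]
      exact inv_anti₀ (by positivity) (hage n)
    · exact hK n
  obtain ⟨B, hB⟩ := hsum
  have hBx : ∀ x, Tendsto (fun N => ∑ n ∈ Finset.range N,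
      ((((2:ℝ)^(2*n^2))⁻¹ : ℝ) : ℂ) • p n x) atTop (nhds (B x)) := by
    intro x
    exact (hB.mapL (ContinuousLinearMap.apply ℂ X x)).tendsto_sum_nat
  refine ⟨fun n => (2:ℝ)^(2*n^2), ?_, fun n => by positivity, ?_, B, hBx, ?_⟩
  · intro m n hmn
    exact pow_le_pow_right₀ (by norm_num) (by gcongr)
  · exact tendsto_atTop_mono hage (tendsto_pow_atTop_atTop_of_one_lt (by norm_num))
  · rintro ⟨C, hC0, hC⟩
    apply hnotR
    have hBp : ∀ n x, B (p n x) = ((((2:ℝ)^(2*n^2))⁻¹ : ℝ) : ℂ) • p n x := by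
      intro n x
      refine (hB.mapL (ContinuousLinearMap.apply ℂ X (p n x))).unique ?_
      convert hasSum_single n ?_ using 1
      · have := congrArg (fun f => f x) (hp.1 n)
        simp only [ContinuousLinearMap.comp_apply] at this
        simp [this]
      · intro m hm
        have := congrArg (fun f => f x) (hp.2.1 m n hm)
        simp only [ContinuousLinearMap.comp_apply] at this
        simp [this]
    let t : ℕ → ℝ := fun N => (2:ℝ)^(2*N^2+2*N+1)
    let E : ℕ → X →L[ℂ] X := fun N => exp (-((t N : ℂ) • B))
    let D : ℕ → X →L[ℂ] X := fun N => E N - 1 + partialSum p (N+1)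
    have hEp : ∀ N n x, E N (p n x) = Complex.exp (-(((2:ℝ)^(2*N^2+2*N+1) : ℝ) : ℂ) *
        ((((2:ℝ)^(2*n^2))⁻¹ : ℝ) : ℂ)) • p n x := by
      intro N n x
      apply aux_exp_eigen
      rw [ContinuousLinearMap.neg_apply, ContinuousLinearMap.smul_apply, hBp, smul_smul, neg_mul,
        neg_smul]
    have hD : ∀ N, ‖D N‖ ≤ (2 * K) * (1/2)^N := by
      intro N
      refine ContinuousLinearMap.opNorm_le_bound _ (by positivity) fun x => ?_
      have hx := hp.2.2 x
      have hEx := ((E N).continuous.tendsto x).comp hx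
      have hl := ((hEx.sub hx).add_const (partialSum p (N+1) x)).norm
      refine le_of_tendsto hl ?_
      filter_upwards [eventually_ge_atTop (N+1)] with M hM
      have key : (E N) (∑ n ∈ Finset.range M, p n x) - ∑ n ∈ Finset.range M, p n x
          + partialSum p (N+1) x = ∑ n ∈ Finset.range M,
          (Complex.exp (-(((2:ℝ)^(2*N^2+2*N+1) : ℝ) : ℂ) * ((((2:ℝ)^(2*n^2))⁻¹ : ℝ) : ℂ)) - 1
      + (if n < N + 1 then 1 else 0)) • p n x := by
        have hP : partialSum p (N+1) x =
            ∑ n ∈ Finset.range M, (if n < N + 1 then (1:ℂ) else 0) • p n x := by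
          simp only [partialSum, ContinuousLinearMap.sum_apply, ite_smul, one_smul, zero_smul]
          rw [← Finset.sum_filter]
          refine Finset.sum_congr ?_ fun _ _ => rfl
          ext n
          simp only [Finset.mem_range, Finset.mem_filter]
          omega
        rw [hP, map_sum, ← Finset.sum_sub_distrib, ← Finset.sum_add_distrib]
        refine Finset.sum_congr rfl fun n _ => ?_
        rw [hEp, add_smul, sub_smul, one_smul]
      simp only [Function.comp_apply]
      rw [key]
      calc _ ≤ ∑ n ∈ Finset.range M, ((1/2:ℝ)^N * (1/2)^n) * (K * ‖x‖) := by
            refine norm_sum_le_of_le _ fun n _ => ?_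
            rw [norm_smul]
            gcongr
            · exact aux_coef N n
            · exact (p n).le_of_opNorm_le (hK n) x
        _ = (∑ n ∈ Finset.range M, (1/2:ℝ)^n) * ((1/2:ℝ)^N * (K * ‖x‖)) := by
            rw [Finset.sum_mul]
            refine Finset.sum_congr rfl fun n _ => ?_
            ring
        _ ≤ 2 * ((1/2:ℝ)^N * (K * ‖x‖)) := by
            gcongr
            exact (summable_geometric_two.sum_le_tsum _ (fun _ _ => by positivity)).trans_eq
              tsum_geometric_two
        _ = _ := by ring
    refine ⟨1 + C + 2 * (2 * K), by positivity, fun k T x hT => ?_⟩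
    choose n hn using hT
    have h1 : (fun j => T j (x j)) =
        fun j => (x j + - (E (n j) (x j))) + D (n j) (x j) := by
      funext j
      rw [← hn j]
      simp [D]
      abel
    rw [h1]
    have i1 := aux_signAvg_add k (fun j => x j + - (E (n j) (x j))) (fun j => D (n j) (x j))
    have i2 := aux_signAvg_add k x (fun j => - (E (n j) (x j)))
    have i3 := aux_signAvg_neg k (fun j => (E (n j) (x j)))
    have i4 := hC k (fun j => E (n j)) x (fun j => ⟨t (n j), by positivity, rfl⟩)
    have i5 := aux_signAvg_diag D (2*K) hD k n x
    linarith
end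

section
/- Let (p_n)_{n≥1} be a Schauder decomposition of a complex Banach space X which is NOT R-Schauder. Then there exists a nondecreasing sequence (c_n)_{n≥1} of real numbers with 0 < c_n < 1 for all n such that the multiplier operator T = M_c ∈ B(X) satisfies sup_{n≥0} ‖T^n‖ < ∞ but the set {T^n : n ≥ 0} is not R-bounded. -/
open Filter Topology NormedSpace

section helpers
variable {X : Type*} [NormedAddCommGroup X] [NormedSpace ℂ X]

lemma signAvg_nonneg' (k : ℕ) (v : Fin k → X) : 0 ≤ signAvg k v := by
  unfold signAvg; positivity

lemma signAvg_add_le (k : ℕ) (v w : Fin k → X) :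
    signAvg k (fun j => v j + w j) ≤ signAvg k v + signAvg k w := by
  unfold signAvg
  rw [← mul_add, ← Finset.sum_add_distrib]
  gcongr with ε
  simp only [smul_add, Finset.sum_add_distrib]
  exact norm_add_le _ _

lemma signAvg_neg' (k : ℕ) (v : Fin k → X) :
    signAvg k (fun j => - v j) = signAvg k v := by
  unfold signAvg
  simp only [smul_neg, Finset.sum_neg_distrib, norm_neg]

lemma signAvg_sum_le (k : ℕ) {ι : Type*} (s : Finset ι) (v : ι → Fin k → X) :
    signAvg k (fun j => ∑ i ∈ s, v i j) ≤ ∑ i ∈ s, signAvg k (v i) := by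
  classical
  induction s using Finset.induction_on with
  | empty => simp [signAvg]
  | insert a s ha ih =>
    simp only [Finset.sum_insert ha]
    exact (signAvg_add_le k _ _).trans (by gcongr)

lemma signAvg_map_le (k : ℕ) (S : X →L[ℂ] X) (v : Fin k → X) :
    signAvg k (fun j => S (v j)) ≤ ‖S‖ * signAvg k v := by
  unfold signAvg
  rw [mul_left_comm, Finset.mul_sum (a := ‖S‖)]
  gcongr with ε
  have : ∑ j : Fin k, (if ε j then (1 : ℝ) else -1) • S (v j)
      = S (∑ j : Fin k, (if ε j then (1 : ℝ) else -1) • v j) := by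
    rw [map_sum]
    refine Finset.sum_congr rfl fun j _ => ?_
    split_ifs <;> simp
  rw [this]
  exact S.le_opNorm _

lemma signAvg_flip (k : ℕ) (q : Fin k → Bool) (v : Fin k → X) :
    signAvg k (fun j => if q j then v j else - v j) = signAvg k v := by
  unfold signAvg
  congr 1
  have hinv : Function.Involutive (fun (ε : Fin k → Bool) (j : Fin k) => (ε j == q j)) := by
    intro ε; funext j; show ((ε j == q j) == q j) = ε j
    generalize ε j = a; generalize q j = b; cases a <;> cases b <;> rfl
  refine Fintype.sum_equiv hinv.toPerm _ _ fun ε => ?_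
  congr 1
  refine Finset.sum_congr rfl fun j _ => ?_
  simp only [Function.Involutive.coe_toPerm]
  rcases Bool.eq_false_or_eq_true (ε j) with h | h <;>
    rcases Bool.eq_false_or_eq_true (q j) with h' | h' <;> simp [h, h']

lemma signAvg_ite_le (k : ℕ) (q : Fin k → Bool) (v : Fin k → X) :
    signAvg k (fun j => if q j then v j else 0) ≤ signAvg k v := by
  have h1 : signAvg k (fun j => (if q j then v j else 0) + (if q j then v j else 0))
      ≤ signAvg k v + signAvg k v := by
    have := signAvg_add_le k v (fun j => if q j then v j else - v j)
    rw [signAvg_flip] at this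
    convert this using 3 with j
    cases q j <;> simp
  have h2 : signAvg k (fun j => (if q j then v j else 0) + (if q j then v j else 0))
      = 2 * signAvg k (fun j => if q j then v j else 0) := by
    unfold signAvg
    rw [mul_left_comm, Finset.mul_sum (a := (2:ℝ))]
    congr 1
    refine Finset.sum_congr rfl fun ε _ => ?_
    simp only [smul_add, Finset.sum_add_distrib]
    rw [← two_smul ℝ, norm_smul]; simp
  linarith

lemma signAvg_summable (S : ℕ → X →L[ℂ] X) (hS : Summable fun n => ‖S n‖)
    (k : ℕ) (N : Fin k → ℕ) (x : Fin k → X) :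
    signAvg k (fun j => S (N j) (x j)) ≤ (∑' n, ‖S n‖) * signAvg k x := by
  classical
  have h0 : (fun j => S (N j) (x j)) = fun j => ∑ n ∈ Finset.univ.image N,
      S n (if decide (N j = n) then x j else 0) := by
    funext j
    rw [Finset.sum_eq_single (N j)]
    · simp
    · intro b _ hb
      simp [hb.symm]
    · intro h; exact absurd (Finset.mem_image_of_mem N (Finset.mem_univ j)) h
  rw [h0]
  calc _ ≤ ∑ n ∈ Finset.univ.image N,
        signAvg k (fun j => S n (if decide (N j = n) then x j else 0)) := signAvg_sum_le k _ _
    _ ≤ ∑ n ∈ Finset.univ.image N, ‖S n‖ * signAvg k x := by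
        gcongr with n
        refine (signAvg_map_le k _ _).trans ?_
        gcongr
        exact signAvg_ite_le k (fun j => decide (N j = n)) x
    _ = (∑ n ∈ Finset.univ.image N, ‖S n‖) * signAvg k x := by rw [Finset.sum_mul]
    _ ≤ _ := by
        gcongr
        · exact signAvg_nonneg' _ _
        · exact hS.sum_le_tsum _ (fun _ _ => norm_nonneg _)

lemma abel_sum (p : ℕ → X →L[ℂ] X) (d : ℕ → ℝ) (x : X) (N : ℕ) :
    ∑ n ∈ Finset.range N, ((d n : ℝ) : ℂ) • p n x =
      ((d N : ℝ) : ℂ) • partialSum p N x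
        - ∑ n ∈ Finset.range N, ((d (n+1) - d n : ℝ) : ℂ) • partialSum p (n+1) x := by
  induction N with
  | zero => simp [partialSum]
  | succ N ih =>
    rw [Finset.sum_range_succ, ih, Finset.sum_range_succ _ N]
    have : partialSum p (N+1) x = partialSum p N x + p N x := by
      simp [partialSum, Finset.sum_range_succ]
    rw [this]
    push_cast
    module

lemma norm_mult_le (p : ℕ → X →L[ℂ] X) (hp : IsSchauderDecomposition p) (K : ℝ) (hK0 : 0 ≤ K)
    (hK : ∀ N, ‖partialSum p N‖ ≤ K) (d : ℕ → ℝ) (B : ℝ) 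
    (hB : ∀ N, |d N| + ∑ n ∈ Finset.range N, |d (n+1) - d n| ≤ B)
    (S : X →L[ℂ] X) (hS : ∀ n x, p n (S x) = ((d n : ℝ) : ℂ) • p n x) :
    ‖S‖ ≤ K * B := by
  have hB0 : 0 ≤ B := (by positivity : (0:ℝ) ≤ _).trans (hB 0)
  refine S.opNorm_le_bound (by positivity) fun x => ?_
  have h := hp.2.2 (S x)
  simp only [hS] at h
  refine le_of_tendsto h.norm (Eventually.of_forall fun N => ?_)
  rw [abel_sum]
  have hP : ∀ n, ‖partialSum p n x‖ ≤ K * ‖x‖ := fun n =>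
    ((partialSum p n).le_opNorm x).trans (by gcongr; exact hK n)
  calc _ ≤ ‖((d N : ℝ) : ℂ) • partialSum p N x‖
        + ‖∑ n ∈ Finset.range N, ((d (n+1) - d n : ℝ) : ℂ) • partialSum p (n+1) x‖ := norm_sub_le _ _
    _ ≤ |d N| * (K * ‖x‖) + ∑ n ∈ Finset.range N, |d (n+1) - d n| * (K * ‖x‖) := by
        gcongr
        · rw [norm_smul, Complex.norm_real, Real.norm_eq_abs]
          gcongr; exact hP _
        · refine norm_sum_le_of_le _ fun n _ => ?_
          rw [norm_smul, Complex.norm_real, Real.norm_eq_abs]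
          gcongr; exact hP _
    _ = (|d N| + ∑ n ∈ Finset.range N, |d (n+1) - d n|) * (K * ‖x‖) := by
        rw [← Finset.sum_mul]; ring
    _ ≤ B * (K * ‖x‖) := by gcongr; exact hB N
    _ = _ := by ring

lemma sum_abs_mono (c : ℕ → ℝ) (N : ℕ) (hc : ∀ n < N, c n ≤ c (n+1)) :
    ∑ n ∈ Finset.range N, |c (n+1) - c n| = c N - c 0 := by
  rw [← Finset.sum_range_sub]
  refine Finset.sum_congr rfl fun n hn => abs_of_nonneg ?_
  linarith [hc n (Finset.mem_range.1 hn)]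

lemma exists_mult [CompleteSpace X] (p : ℕ → X →L[ℂ] X) (hp : IsSchauderDecomposition p) (K : ℝ)
    (hK : ∀ N, ‖partialSum p N‖ ≤ K) (c : ℕ → ℝ) (hc : Monotone c) 
    (h01 : ∀ n, 0 < c n ∧ c n < 1) :
    ∃ T : X →L[ℂ] X, ∀ x : X, Tendsto (fun N => ∑ n ∈ Finset.range N, ((c n : ℝ) : ℂ) • p n x)
          atTop (nhds (T x)) := by
  have hL : Tendsto c atTop (nhds (⨆ n, c n)) :=
    tendsto_atTop_ciSup hc ⟨1, by rintro _ ⟨n, rfl⟩; exact (h01 n).2.le⟩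
  set L := ⨆ n, c n
  have hs : Summable fun n => |c (n+1) - c n| := by
    refine summable_of_sum_range_le (c := 1) (fun _ => abs_nonneg _) fun N => ?_
    rw [sum_abs_mono c N (fun n _ => hc n.le_succ)]
    linarith [(h01 N).2, (h01 0).1]
  have hsum : Summable fun n => ((c (n+1) - c n : ℝ) : ℂ) • partialSum p (n+1) := by
    refine Summable.of_norm_bounded (hs.mul_right K) fun n => ?_
    rw [norm_smul, Complex.norm_real, Real.norm_eq_abs]
    gcongr; exact hK _
  refine ⟨(L : ℂ) • ContinuousLinearMap.id ℂ X -
    ∑' n, ((c (n+1) - c n : ℝ) : ℂ) • partialSum p (n+1), fun x => ?_⟩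
  refine Tendsto.congr (fun N => (abel_sum p c x N).symm) ?_
  have h1 : Tendsto (fun N => partialSum p N x) atTop (nhds x) := by
    simpa [partialSum] using hp.2.2 x
  have h2 := (hsum.hasSum.mapL (ContinuousLinearMap.apply ℂ X x)).tendsto_sum_nat
  have h3 : Tendsto (fun N => (c N : ℂ)) atTop (nhds (L : ℂ)) :=
    (Complex.continuous_ofReal.tendsto L).comp hL
  exact (h3.smul h1).sub h2

lemma p_mult (p : ℕ → X →L[ℂ] X) (hp : IsSchauderDecomposition p) (c : ℕ → ℝ) (T : X →L[ℂ] X)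
    (hT : ∀ x : X, Tendsto (fun N => ∑ n ∈ Finset.range N, ((c n : ℝ) : ℂ) • p n x)
          atTop (nhds (T x))) (n : ℕ) (x : X) : p n (T x) = ((c n : ℝ) : ℂ) • p n x := by
  have h := ((p n).continuous.tendsto _).comp (hT x)
  refine tendsto_nhds_unique h (tendsto_const_nhds.congr' ?_)
  filter_upwards [eventually_gt_atTop n] with N hN
  simp only [Function.comp, map_sum, map_smul]
  rw [Finset.sum_eq_single n]
  · congr 1
    exact (DFunLike.congr_fun (hp.1 n) x).symm
  · intro b _ hb
    have := DFunLike.congr_fun (hp.2.1 n b hb.symm) x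
    simp only [ContinuousLinearMap.comp_apply, zero_apply] at this
    rw [this, smul_zero]
  · intro h; exact absurd (Finset.mem_range.2 hN) h

lemma p_mult_pow (p : ℕ → X →L[ℂ] X) (c : ℕ → ℝ) (T : X →L[ℂ] X)
    (hT : ∀ n x, p n (T x) = ((c n : ℝ) : ℂ) • p n x) (m n : ℕ) (x : X) :
    p n ((T ^ m) x) = ((c n ^ m : ℝ) : ℂ) • p n x := by
  induction m generalizing x with
  | zero => simp
  | succ m ih =>
    rw [pow_succ, mul_apply_eq_comp, ih, hT, smul_smul]
    push_cast
    rw [pow_succ]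

lemma p_partialSum (p : ℕ → X →L[ℂ] X) (hp : IsSchauderDecomposition p) (N n : ℕ) (x : X) :
    p n (partialSum p N x) = (((if n < N then 1 else 0 : ℝ)) : ℂ) • p n x := by
  simp only [partialSum, sum_apply, map_sum]
  have h : ∀ i, p n (p i x) = if n = i then p n x else 0 := by
    intro i
    split_ifs with hi
    · subst hi; exact DFunLike.congr_fun (hp.1 n) x
    · exact DFunLike.congr_fun (hp.2.1 n i hi) x
  simp only [h, Finset.sum_ite_eq, Finset.mem_range]
  split_ifs <;> simp

lemma var_bound (e : ℕ → ℝ) (he : Monotone e) (h01 : ∀ n, 0 ≤ e n ∧ e n ≤ 1) (N : ℕ)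
    (d : ℕ → ℝ) (hd : ∀ n, d n = e n - (1 - if n < N + 1 then 1 else 0)) (M : ℕ) :
    |d M| + ∑ n ∈ Finset.range M, |d (n+1) - d n| ≤ 2 * e N + 2 * (1 - e (N+1)) := by
  have h1 : ∀ n, n ≤ N → d n = e n := fun n hn => by rw [hd, if_pos (by omega)]; ring
  have h2 : ∀ n, N < n → d n = e n - 1 := fun n hn => by rw [hd, if_neg (by omega)]; ring
  have hA : ∀ M, M ≤ N → ∑ n ∈ Finset.range M, |d (n+1) - d n| ≤ e M := by
    intro M hM
    rw [sum_abs_mono d M, h1 M hM, h1 0 (by omega)]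
    · linarith [h01 0]
    · intro n hn
      rw [h1 n (by omega), h1 (n+1) (by omega)]
      exact he n.le_succ
  have hB : ∀ k, ∑ n ∈ Finset.range (N + 1 + k), |d (n+1) - d n|
      ≤ 2 * e N + 2 * (1 - e (N+1)) + d (N+1+k) := by
    intro k
    induction k with
    | zero =>
      rw [Nat.add_zero, Finset.sum_range_succ, h1 N le_rfl, h2 (N+1) (by omega)]
      have := hA N le_rfl
      rw [abs_of_nonpos (by linarith [h01 N, h01 (N+1)])]
      linarith
    | succ k ih =>
      rw [← add_assoc, Finset.sum_range_succ]
      rw [abs_of_nonneg]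
      · linarith
      · rw [h2 _ (by omega), h2 _ (by omega)]
        linarith [he (N+1+k).le_succ]
  rcases le_or_gt M N with hM | hM
  · have := hA M hM
    rw [h1 M hM, abs_of_nonneg (h01 M).1]
    linarith [he hM, h01 (N+1)]
  · obtain ⟨k, rfl⟩ := Nat.exists_eq_add_of_le (show N + 1 ≤ M from hM)
    have := hB k
    rw [abs_of_nonpos]
    · linarith
    · rw [h2 _ (by omega)]; linarith [h01 (N+1+k)]

/-- A fast growing sequence. -/
def fastSeq : ℕ → ℕ
  | 0 => 1
  | n + 1 => fastSeq n * (n + 1) * 2 ^ n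

lemma fastSeq_pos (n : ℕ) : 0 < fastSeq n := by
  induction n with
  | zero => simp [fastSeq]
  | succ n ih => simp only [fastSeq]; positivity

lemma fastSeq_mono : Monotone fastSeq := by
  refine monotone_nat_of_le_succ fun n => ?_
  simp only [fastSeq]
  rw [mul_assoc]
  exact Nat.le_mul_of_pos_right _ (by positivity)

end helpers

/-- If a Schauder decomposition is not `R`-Schauder, there is a nondecreasing sequence
`0 < c_n < 1` such that the multiplier `T = M_c` is power bounded but
`{T^n : n ≥ 0}` is not `R`-bounded. -/
theorem statement1 {X : Type*} [NormedAddCommGroup X] [NormedSpace ℂ X] [CompleteSpace X]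
    (p : ℕ → X →L[ℂ] X) (hp : IsSchauderDecomposition p)
    (hnotR : ¬ IsRBounded (Set.range fun N : ℕ => partialSum p (N + 1))) :
    ∃ c : ℕ → ℝ, Monotone c ∧ (∀ n, 0 < c n ∧ c n < 1) ∧
      ∃ T : X →L[ℂ] X,
        (∀ x : X, Tendsto (fun N => ∑ n ∈ Finset.range N, ((c n : ℝ) : ℂ) • p n x)
          atTop (nhds (T x))) ∧
        (∃ C : ℝ, ∀ n : ℕ, ‖T ^ n‖ ≤ C) ∧
        ¬ IsRBounded (Set.range fun n : ℕ => T ^ n) := by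
  obtain ⟨K, hK⟩ : ∃ K, ∀ N, ‖partialSum p N‖ ≤ K := by
    refine banach_steinhaus fun x => ?_
    have h1 : Tendsto (fun N => partialSum p N x) atTop (nhds x) := by
      simpa [partialSum] using hp.2.2 x
    obtain ⟨C, hC⟩ := h1.norm.bddAbove_range
    exact ⟨C, fun i => hC ⟨i, rfl⟩⟩
  have hK0 : 0 ≤ K := (norm_nonneg _).trans (hK 0)
  have hbpos : ∀ n, (0:ℝ) < fastSeq n := fun n => by exact_mod_cast fastSeq_pos n
  set c : ℕ → ℝ := fun n => Real.exp (-(1 / (fastSeq n : ℝ))) with hc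
  have hmono : Monotone c := by
    intro a b hab
    simp only [hc]
    refine Real.exp_le_exp.2 (neg_le_neg ?_)
    exact one_div_le_one_div_of_le (hbpos a) (by exact_mod_cast fastSeq_mono hab)
  have h01 : ∀ n, 0 < c n ∧ c n < 1 := by
    intro n
    refine ⟨Real.exp_pos _, ?_⟩
    simp only [hc]
    rw [Real.exp_lt_one_iff]
    have := hbpos n
    have : 0 < 1 / (fastSeq n : ℝ) := by positivity
    linarith
  obtain ⟨T, hT⟩ := exists_mult p hp K hK c hmono h01
  have hpT := p_mult_pow p c T (p_mult p hp c T hT)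
  have hmonoP : ∀ m : ℕ, Monotone fun n => c n ^ m := fun m a b hab =>
    pow_le_pow_left₀ (h01 a).1.le (hmono hab) m
  have h01P : ∀ m n : ℕ, 0 ≤ c n ^ m ∧ c n ^ m ≤ 1 := fun m n =>
    ⟨pow_nonneg (h01 n).1.le m, pow_le_one₀ (h01 n).1.le (h01 n).2.le⟩
  refine ⟨c, hmono, h01, T, hT, ⟨K * 2, fun m => ?_⟩, ?_⟩
  · refine norm_mult_le p hp K hK0 hK (fun n => c n ^ m) 2 (fun N => ?_) (T ^ m) (hpT m)
    have := sum_abs_mono (fun n => c n ^ m) N (fun n _ => hmonoP m n.le_succ)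
    rw [this]
    show |c N ^ m| + (c N ^ m - c 0 ^ m) ≤ 2
    rw [abs_of_nonneg (h01P m N).1]
    linarith [(h01P m N).2, (h01P m 0).1]
  · rintro ⟨C, hC0, hC⟩
    apply hnotR
    set m : ℕ → ℕ := fun N => fastSeq N * (N + 1) with hm
    set S : ℕ → X →L[ℂ] X := fun N => T ^ (m N) - (1 - partialSum p (N+1)) with hSdef
    have hSn : ∀ N, ‖S N‖ ≤ K * 4 * (1/2) ^ N := by
      intro N
      have hu : c N ^ m N ≤ (1/2) ^ N := by
        have : c N ^ m N = Real.exp (-((N:ℝ)+1)) := by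
          simp only [hc, hm]
          rw [← Real.exp_nat_mul]
          congr 1
          have := (hbpos N).ne'
          push_cast
          field_simp
        rw [this]
        calc Real.exp (-((N:ℝ)+1)) ≤ Real.exp (-(N:ℝ)) := Real.exp_le_exp.2 (by linarith)
          _ = (Real.exp (-1)) ^ N := by rw [← Real.exp_nat_mul]; congr 1; ring
          _ ≤ (1/2) ^ N := by
            gcongr
            rw [Real.exp_neg, one_div]
            gcongr
            linarith [Real.add_one_le_exp (1:ℝ)]
      have hv : 1 - c (N+1) ^ m N ≤ (1/2) ^ N := by
        have : c (N+1) ^ m N = Real.exp (-((1/2) ^ N)) := by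
          simp only [hc, hm]
          rw [← Real.exp_nat_mul]
          congr 1
          have := (hbpos N).ne'
          simp only [fastSeq]
          push_cast
          rw [one_div_pow]
          field_simp
        rw [this]
        linarith [Real.add_one_le_exp (-((1/2:ℝ) ^ N))]
      have := norm_mult_le p hp K hK0 hK
        (fun n => c n ^ m N - (1 - if n < N + 1 then 1 else 0))
        _ (var_bound _ (hmonoP (m N)) (h01P (m N)) N _ (fun n => rfl)) (S N) (fun n x => by
          simp only [hSdef, sub_apply, one_apply_eq_self, map_sub,
            hpT, p_partialSum p hp]
          push_cast
          module)
      refine this.trans ?_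
      rw [mul_assoc]
      gcongr
      linarith
    have hS : Summable fun N => ‖S N‖ :=
      Summable.of_nonneg_of_le (fun _ => norm_nonneg _) hSn
        (summable_geometric_two.mul_left (K * 4))
    refine ⟨1 + C + ∑' n, ‖S n‖, by positivity, fun k U x hU => ?_⟩
    choose N hN using hU
    have e : (fun j => U j (x j)) = fun j => (x j + -((T ^ m (N j)) (x j))) + S (N j) (x j) := by
      funext j
      rw [← hN j]
      simp only [hSdef, sub_apply, one_apply_eq_self]
      abel
    rw [e]
    have a1 := signAvg_add_le k (fun j => x j + -((T ^ m (N j)) (x j))) (fun j => S (N j) (x j))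
    have a2 := signAvg_add_le k x (fun j => -((T ^ m (N j)) (x j)))
    rw [signAvg_neg'] at a2
    have a3 := hC k (fun j => T ^ m (N j)) x (fun j => ⟨_, rfl⟩)
    have a4 := signAvg_summable S hS k N x
    linarith
end

section
/- Let X be a complex Banach space, let 0 < ω < θ < π, and let A ∈ B(X) be an invertible bounded operator with spectrum σ(A) ⊆ closure(Σ_ω), such that the set {λ (λ I − A)^{-1} : λ ∈ ℂ ∖ closure(Σ_θ)} is R-bounded. Then σ(A^{-1}) ⊆ closure(Σ_ω), and the set {λ (λ I − A^{-1})^{-1} : λ ∈ ℂ ∖ closure(Σ_θ)} is also R-bounded. -/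
open Filter Topology NormedSpace

/-- The open sector `Σ_θ = {λ ∈ ℂ∖{0} : |Arg λ| < θ}`. -/
def sector (θ : ℝ) : Set ℂ := {z : ℂ | z ≠ 0 ∧ |Complex.arg z| < θ}

theorem aux_inv_closure (θ : ℝ) (z : ℂ) (hz : z ∈ closure (sector θ)) :
    z⁻¹ ∈ closure (sector θ) := by
  by_cases h : z = 0
  · subst h; simpa using hz
  · have hc : ContinuousWithinAt (fun w : ℂ => w⁻¹) (sector θ) z :=
      (continuousAt_inv₀ h).continuousWithinAt
    have := hc.mem_closure_image hz
    refine closure_mono ?_ this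
    rintro _ ⟨w, ⟨hw0, hw⟩, rfl⟩
    refine ⟨inv_ne_zero hw0, ?_⟩
    rw [Complex.abs_arg_inv]
    exact hw

theorem aux_zero_mem (θ : ℝ) (h : 0 < θ) : (0 : ℂ) ∈ closure (sector θ) := by
  have h0 : (0 : ℝ) ∈ closure (Set.Ioi (0 : ℝ)) := by simp [closure_Ioi]
  have hc : ContinuousWithinAt (fun w : ℝ => (w : ℂ)) (Set.Ioi 0) 0 :=
    Complex.continuous_ofReal.continuousWithinAt
  have := hc.mem_closure_image h0
  rw [Complex.ofReal_zero] at this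
  refine closure_mono ?_ this
  rintro _ ⟨w, hw, rfl⟩
  have hw' : (0 : ℝ) < w := hw
  refine ⟨Complex.ofReal_ne_zero.mpr hw'.ne', ?_⟩
  rw [Complex.arg_ofReal_of_nonneg hw'.le]
  simpa using h

theorem aux_signAvg_sub {X : Type*} [NormedAddCommGroup X] [NormedSpace ℂ X]
    (k : ℕ) (v w : Fin k → X) :
    signAvg k (fun j => v j - w j) ≤ signAvg k v + signAvg k w := by
  unfold signAvg
  rw [← mul_add, ← Finset.sum_add_distrib]
  refine mul_le_mul_of_nonneg_left (Finset.sum_le_sum fun ε _ => ?_) (by positivity)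
  simp only [smul_sub, Finset.sum_sub_distrib]
  exact norm_sub_le _ _

theorem aux_alg {R : Type*} [Ring R] [Algebra ℂ R] (A B : R) (hAB : A * B = 1)
    (hBA : B * A = 1) (l : ℂ) (hl : l ≠ 0) (hU : IsUnit (algebraMap ℂ R l⁻¹ - A)) :
    l • Ring.inverse (algebraMap ℂ R l - B)
      = 1 - l⁻¹ • Ring.inverse (algebraMap ℂ R l⁻¹ - A) := by
  have h1 := Ring.mul_inverse_cancel _ hU
  have h2 := Ring.inverse_mul_cancel _ hU
  set U := algebraMap ℂ R l⁻¹ - A with hUdef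
  set V := Ring.inverse U
  have hA : A = l⁻¹ • (1 : R) - U := by rw [hUdef, Algebra.algebraMap_eq_smul_one]; abel
  have hE : algebraMap ℂ R l - B = (-l) • (B * U) := by
    rw [hUdef, Algebra.algebraMap_eq_smul_one, Algebra.algebraMap_eq_smul_one, mul_sub, hBA,
      mul_smul_comm, mul_one, smul_sub, smul_smul, neg_mul, mul_inv_cancel₀ hl]
    simp only [neg_smul, one_smul]
    abel
  have e1 : (algebraMap ℂ R l - B) * ((-l⁻¹) • (V * A)) = 1 := by
    rw [hE, smul_mul_smul_comm, neg_mul_neg, mul_inv_cancel₀ hl, one_smul,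
      mul_assoc, ← mul_assoc U, h1, one_mul, hBA]
  have e2 : ((-l⁻¹) • (V * A)) * (algebraMap ℂ R l - B) = 1 := by
    rw [hE, smul_mul_smul_comm, neg_mul_neg, inv_mul_cancel₀ hl, one_smul,
      mul_assoc, ← mul_assoc A, hAB, one_mul, h2]
  have hi : Ring.inverse (algebraMap ℂ R l - B) = (-l⁻¹) • (V * A) :=
    Ring.inverse_unit (⟨_, _, e1, e2⟩ : Rˣ)
  rw [hi, smul_smul, mul_neg, mul_inv_cancel₀ hl, hA, mul_sub, h2, mul_smul_comm, mul_one]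
  simp

/-- If an invertible bounded operator `A` (with inverse `B`) has spectrum in
`closure Σ_ω` and `R`-bounded resolvent set off `closure Σ_θ`, the same holds
for its inverse. -/
theorem statement4 {X : Type*} [NormedAddCommGroup X] [NormedSpace ℂ X] [CompleteSpace X]
    (ω θ : ℝ) (hω : 0 < ω) (hωθ : ω < θ) (hθ : θ < Real.pi)
    (A B : X →L[ℂ] X) (hAB : A * B = 1) (hBA : B * A = 1)
    (hspec : spectrum ℂ A ⊆ closure (sector ω))
    (hRb : IsRBounded {S : X →L[ℂ] X | ∃ lam : ℂ, lam ∉ closure (sector θ) ∧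
      S = lam • Ring.inverse (algebraMap ℂ (X →L[ℂ] X) lam - A)}) :
    spectrum ℂ B ⊆ closure (sector ω) ∧
    IsRBounded {S : X →L[ℂ] X | ∃ lam : ℂ, lam ∉ closure (sector θ) ∧
      S = lam • Ring.inverse (algebraMap ℂ (X →L[ℂ] X) lam - B)} := by
  constructor
  · intro z hz
    let u : (X →L[ℂ] X)ˣ := ⟨A, B, hAB, hBA⟩
    have h : z ∈ spectrum ℂ (↑u⁻¹ : X →L[ℂ] X) := hz
    rw [← spectrum.map_inv] at h
    have h2 : z⁻¹ ∈ spectrum ℂ A := h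
    simpa using aux_inv_closure ω _ (hspec h2)
  · obtain ⟨C, hC, H⟩ := hRb
    refine ⟨1 + C, by positivity, fun k T x hT => ?_⟩
    choose l hl hTl using hT
    have hl' : ∀ j, (l j)⁻¹ ∉ closure (sector θ) := fun j hj =>
      hl j (by simpa using aux_inv_closure θ _ hj)
    have key : ∀ j, T j = 1 - (l j)⁻¹ •
        Ring.inverse (algebraMap ℂ (X →L[ℂ] X) (l j)⁻¹ - A) := by
      intro j
      rw [hTl j]
      refine aux_alg A B hAB hBA (l j) ?_ ?_
      · intro h0
        exact hl j (h0 ▸ aux_zero_mem θ (hω.trans hωθ))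
      · refine spectrum.notMem_iff.mp fun hm => hl' j ?_
        refine closure_mono ?_ (hspec hm)
        exact fun w hw => ⟨hw.1, hw.2.trans hωθ⟩
    have h1 := H k (fun j => (l j)⁻¹ •
      Ring.inverse (algebraMap ℂ (X →L[ℂ] X) (l j)⁻¹ - A)) x (fun j => ⟨_, hl' j, rfl⟩)
    have h2 := aux_signAvg_sub k x (fun j => ((l j)⁻¹ •
      Ring.inverse (algebraMap ℂ (X →L[ℂ] X) (l j)⁻¹ - A)) (x j))
    have h3 : (fun j => (T j) (x j)) = fun j => x j - ((l j)⁻¹ •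
      Ring.inverse (algebraMap ℂ (X →L[ℂ] X) (l j)⁻¹ - A)) (x j) := by
      funext j
      rw [key j]
      rfl
    rw [h3]
    linarith
end

section
/- Let (p_n)_{n≥1} be a Schauder decomposition of a complex Banach space X with K := sup_{N≥1} ‖P_N‖, and set Q_N := I − P_N for N ≥ 1. Let c = (c_n)_{n≥1} be a complex sequence with bounded variation such that lim_n c_n = 1, and let M_c be the associated multiplier operator. Then for every N ≥ 1, ‖M_c − Q_N‖ ≤ (1+K) ( ∑_{n=1}^{N−1} |c_{n+1} − c_n| + |c_N| + |1 − c_{N+1}| + ∑_{n=N+1}^∞ |c_{n+1} − c_n| ). -/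
open Filter Topology NormedSpace

/-- Estimate of `‖M_c − Q_N‖` for a bounded-variation sequence `c` with limit `1`,
where `Q_N = I − P_N`. (The index `N + 1` here corresponds to `N ≥ 1` in classical,
`1`-based notation.) -/
theorem statement7 {X : Type*} [NormedAddCommGroup X] [NormedSpace ℂ X] [CompleteSpace X]
    (p : ℕ → X →L[ℂ] X) (hp : IsSchauderDecomposition p)
    (K : ℝ) (hK : ∀ N : ℕ, ‖partialSum p (N + 1)‖ ≤ K)
    (c : ℕ → ℂ) (hbv : Summable fun n => ‖c n - c (n + 1)‖)
    (hl : Tendsto c atTop (nhds (1 : ℂ)))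
    (M : X →L[ℂ] X)
    (hM : ∀ x : X, Tendsto (fun N => ∑ n ∈ Finset.range N, c n • p n x) atTop (nhds (M x))) :
    ∀ N : ℕ,
      ‖M - (1 - partialSum p (N + 1))‖ ≤
        (1 + K) * ((∑ n ∈ Finset.range N, ‖c (n + 1) - c n‖) + ‖c N‖ + ‖1 - c (N + 1)‖
          + ∑' n : ℕ, ‖c (n + N + 2) - c (n + N + 1)‖) := by
  intro N
  have hK0 : 0 ≤ K := (norm_nonneg _).trans (hK 0)
  obtain ⟨-, -, hS⟩ := hp
  set D : ℝ := (∑ n ∈ Finset.range N, ‖c (n + 1) - c n‖) + ‖c N‖ + ‖1 - c (N + 1)‖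
          + ∑' n : ℕ, ‖c (n + N + 2) - c (n + N + 1)‖ with hD
  have hsum : Summable fun n : ℕ => ‖c (n + N + 2) - c (n + N + 1)‖ := by
    have h := (summable_nat_add_iff (N + 1)).2 hbv
    refine h.congr fun n => ?_
    rw [norm_sub_rev]
    rfl
  have hD0 : 0 ≤ D := by
    have : 0 ≤ ∑' n : ℕ, ‖c (n + N + 2) - c (n + N + 1)‖ := tsum_nonneg fun _ => norm_nonneg _
    have h2 : 0 ≤ ∑ n ∈ Finset.range N, ‖c (n + 1) - c n‖ :=
      Finset.sum_nonneg fun _ _ => norm_nonneg _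
    positivity
  refine ContinuousLinearMap.opNorm_le_bound _ (by positivity) fun x => ?_
  let S : ℕ → X := fun n => ∑ i ∈ Finset.range n, p i x
  have hSsucc : ∀ n, S (n + 1) = S n + p n x := fun n => Finset.sum_range_succ _ _
  have hPS : ∀ n, partialSum p n x = S n := fun n => by
    simp [partialSum, S]
  have hSn : ∀ n, ‖S (n + 1)‖ ≤ K * ‖x‖ := fun n => by
    rw [← hPS]
    exact (ContinuousLinearMap.le_opNorm _ _).trans
      (mul_le_mul_of_nonneg_right (hK n) (norm_nonneg _))
  set B : ℝ := (1 + K) * ‖x‖ with hB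
  have hB0 : 0 ≤ B := by positivity
  have hSB : ∀ n, ‖S (n + 1)‖ ≤ B := fun n => by
    have := hSn n
    have := norm_nonneg x
    rw [hB]; linarith
  have hRB : ∀ n, ‖x - S (n + 1)‖ ≤ B := fun n => by
    have := hSn n
    have := norm_sub_le x (S (n + 1))
    rw [hB]; linarith
  have hsm : ∀ (a : ℂ) (y : X), ‖y‖ ≤ B → ‖a • y‖ ≤ ‖a‖ * B := fun a y hy => by
    rw [norm_smul]; exact mul_le_mul_of_nonneg_left hy (norm_nonneg _)
  have hA : ∀ n, ∑ i ∈ Finset.range (n + 1), c i • p i x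
      = c n • S (n + 1) - ∑ i ∈ Finset.range n, (c (i + 1) - c i) • S (i + 1) := by
    intro n
    induction n with
    | zero => simp [S]
    | succ n ih =>
      rw [Finset.sum_range_succ, ih, Finset.sum_range_succ _ n, hSsucc (n + 1)]
      module
  have hE : ∀ k, ∑ i ∈ Finset.range (k + (N + 1)), c i • p i x - (S (k + (N + 1)) - S (N + 1))
      = (c N • S (N + 1) - ∑ i ∈ Finset.range N, (c (i + 1) - c i) • S (i + 1))
        + (c (N + 1) - 1) • (x - S (N + 1))
        + ∑ j ∈ Finset.range k, (c (j + N + 2) - c (j + N + 1)) • (x - S (j + N + 2))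
        - (c (k + N + 1) - 1) • (x - S (k + N + 1)) := by
    intro k
    induction k with
    | zero => simp only [zero_add, Finset.range_zero, Finset.sum_empty, hA]; abel
    | succ k ih =>
      have e : k + 1 + (N + 1) = (k + N + 1) + 1 := by ring
      have e2 : k + 1 + N + 1 = (k + N + 1) + 1 := by ring
      have e3 : k + (N + 1) = k + N + 1 := by ring
      have e4 : k + N + 2 = (k + N + 1) + 1 := by ring
      rw [e3] at ih
      rw [e, e2, Finset.sum_range_succ _ (k + N + 1), Finset.sum_range_succ _ k, e4,
        hSsucc (k + N + 1)]
      rw [sub_eq_iff_eq_add] at ih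
      rw [ih]
      module
  have hbound : ∀ k, ‖∑ i ∈ Finset.range (k + (N + 1)), c i • p i x
      - (S (k + (N + 1)) - S (N + 1))‖ ≤ D * B + ‖c (k + (N + 1)) - 1‖ * B := by
    intro k
    rw [hE]
    have h1 := hsm (c N) _ (hSB N)
    have h2 : ‖∑ i ∈ Finset.range N, (c (i + 1) - c i) • S (i + 1)‖
        ≤ (∑ n ∈ Finset.range N, ‖c (n + 1) - c n‖) * B := by
      rw [Finset.sum_mul]
      exact norm_sum_le_of_le _ fun i _ => hsm _ _ (hSB i)
    have h3 := hsm (c (N + 1) - 1) _ (hRB N)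
    rw [norm_sub_rev (c (N + 1))] at h3
    have h4 : ‖∑ j ∈ Finset.range k, (c (j + N + 2) - c (j + N + 1)) • (x - S (j + N + 2))‖
        ≤ (∑' n : ℕ, ‖c (n + N + 2) - c (n + N + 1)‖) * B := by
      refine le_trans ?_ (mul_le_mul_of_nonneg_right
        (hsum.sum_le_tsum (Finset.range k) fun _ _ => norm_nonneg _) hB0)
      rw [Finset.sum_mul]
      exact norm_sum_le_of_le _ fun i _ => hsm _ _ (hRB (i + N + 1))
    have h5 := hsm (c (k + N + 1) - 1) _ (hRB (k + N))
    refine (norm_sub_le _ _).trans (add_le_add ?_ h5)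
    rw [hD, add_mul, add_mul, add_mul]
    refine (norm_add_le _ _).trans (add_le_add ((norm_add_le _ _).trans (add_le_add ?_ h3)) h4)
    refine (norm_sub_le _ _).trans ?_
    linarith
  have hlim := (((hM x).comp (tendsto_add_atTop_nat (N + 1))).sub
    (((hS x).comp (tendsto_add_atTop_nat (N + 1))).sub_const (S (N + 1)))).norm
  have hlim2 : Tendsto (fun k => D * B + ‖c (k + (N + 1)) - 1‖ * B) atTop (nhds (D * B)) := by
    have h := ((((hl.comp (tendsto_add_atTop_nat (N + 1))).sub_const 1).norm).mul_const B).const_add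
      (D * B)
    simpa using h
  have h := le_of_tendsto_of_tendsto' hlim hlim2 hbound
  have e : (M - (1 - partialSum p (N + 1))) x = M x - (x - S (N + 1)) := by
    simp [hPS]
  rw [e]
  refine h.trans (le_of_eq ?_)
  rw [hB]; ring
end

section
/- Let (p_n)_{n≥1} be a Schauder decomposition of a complex Banach space X with K := sup_{N≥1} ‖P_N‖, and set Q_N := I − P_N. Let (a_n)_{n≥1} be a nondecreasing sequence of positive real numbers with a_n → ∞, and let B = M_b ∈ B(X) be the multiplier operator associated with b_n = a_n^{-1}. Then for every t > 0 and every N ≥ 1, ‖exp(−tB) − Q_N‖ ≤ 2(1+K) ( e^{−t/a_N} + (1 − e^{−t/a_{N+1}}) ). -/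
open Filter Topology NormedSpace

lemma abel_aux {X : Type*} [NormedAddCommGroup X] [NormedSpace ℂ X]
    (c : ℕ → ℝ) (hc : Monotone c) (f : ℕ → X) (R : ℝ)
    (hf : ∀ k, ‖∑ i ∈ Finset.range (k + 1), f i‖ ≤ R) (m : ℕ) :
    ‖∑ i ∈ Finset.range (m + 1), (c i : ℂ) • f i
      - (c m : ℂ) • ∑ i ∈ Finset.range (m + 1), f i‖ ≤ (c m - c 0) * R := by
  induction m with
  | zero => simp
  | succ m ih =>
    have h1 : ∑ i ∈ Finset.range (m + 1 + 1), (c i : ℂ) • f i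
      - (c (m + 1) : ℂ) • ∑ i ∈ Finset.range (m + 1 + 1), f i
      = (∑ i ∈ Finset.range (m + 1), (c i : ℂ) • f i
      - (c m : ℂ) • ∑ i ∈ Finset.range (m + 1), f i)
      + ((c m - c (m + 1) : ℝ) : ℂ) • ∑ i ∈ Finset.range (m + 1), f i := by
      rw [Finset.sum_range_succ _ (m + 1), Finset.sum_range_succ f (m + 1)]
      push_cast
      module
    rw [h1]
    have hm : c m ≤ c (m + 1) := hc (Nat.le_succ m)
    have h2 : ‖((c m - c (m + 1) : ℝ) : ℂ) • ∑ i ∈ Finset.range (m + 1), f i‖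
        ≤ (c (m + 1) - c m) * R := by
      rw [norm_smul, Complex.norm_real, Real.norm_eq_abs, abs_of_nonpos (by linarith), neg_sub]
      exact mul_le_mul_of_nonneg_left (hf m) (by linarith)
    refine (norm_add_le _ _).trans ?_
    linarith

lemma abel_bound {X : Type*} [NormedAddCommGroup X] [NormedSpace ℂ X]
    (c : ℕ → ℝ) (hc : Monotone c) (f : ℕ → X) (R : ℝ)
    (hf : ∀ k, ‖∑ i ∈ Finset.range (k + 1), f i‖ ≤ R) (m : ℕ) :
    ‖∑ i ∈ Finset.range (m + 1), (c i : ℂ) • f i‖ ≤ (c m - c 0 + |c m|) * R := by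
  have h := abel_aux c hc f R hf m
  have h2 : ‖(c m : ℂ) • ∑ i ∈ Finset.range (m + 1), f i‖ ≤ |c m| * R := by
    rw [norm_smul, Complex.norm_real, Real.norm_eq_abs]
    exact mul_le_mul_of_nonneg_left (hf m) (abs_nonneg _)
  have h3 := norm_add_le (∑ i ∈ Finset.range (m + 1), (c i : ℂ) • f i
      - (c m : ℂ) • ∑ i ∈ Finset.range (m + 1), f i) ((c m : ℂ) • ∑ i ∈ Finset.range (m + 1), f i)
  rw [sub_add_cancel] at h3
  linarith

lemma exp_eig {X : Type*} [NormedAddCommGroup X] [NormedSpace ℂ X] [CompleteSpace X]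
    (A : X →L[ℂ] X) (l : ℂ) (v : X) (h : A v = l • v) : (exp A) v = Complex.exp l • v := by
  have hp : ∀ n : ℕ, (A ^ n) v = l ^ n • v := by
    intro n
    induction n with
    | zero => simp
    | succ n ih =>
      rw [pow_succ, mul_apply_eq_comp, h, map_smul, ih, smul_smul, pow_succ, mul_comm]
  have h1 : HasSum (fun n : ℕ => ((n.factorial : ℂ)⁻¹ • A ^ n)) (exp A) :=
    exp_series_hasSum_exp' (𝕂 := ℂ) A
  have h2 : HasSum (fun n : ℕ => ((n.factorial : ℂ)⁻¹ • l ^ n)) (exp l) :=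
    exp_series_hasSum_exp' (𝕂 := ℂ) l
  have h3 := h1.mapL (ContinuousLinearMap.apply ℂ X v)
  have h4 := h2.smul_const v
  rw [Complex.exp_eq_exp_ℂ]
  refine h3.unique ?_
  convert h4 using 2 with n
  simp [hp, smul_smul]

/-- Norm estimate `‖exp(−tB) − Q_N‖ ≤ 2(1+K)(e^{−t/a_N} + (1 − e^{−t/a_{N+1}}))`, where
`B = M_b`, `b_n = a_n⁻¹`, `Q_N = I − P_N`. (The index `N + 1` corresponds to `N ≥ 1`
in classical `1`-based notation.) -/
theorem statement9 {X : Type*} [NormedAddCommGroup X] [NormedSpace ℂ X] [CompleteSpace X]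
    (p : ℕ → X →L[ℂ] X) (hp : IsSchauderDecomposition p)
    (K : ℝ) (hK : ∀ N : ℕ, ‖partialSum p (N + 1)‖ ≤ K)
    (a : ℕ → ℝ) (ha : Monotone a) (hapos : ∀ n, 0 < a n) (hatop : Tendsto a atTop atTop)
    (B : X →L[ℂ] X)
    (hB : ∀ x : X, Tendsto (fun N => ∑ n ∈ Finset.range N, (((a n)⁻¹ : ℝ) : ℂ) • p n x)
      atTop (nhds (B x))) :
    ∀ t : ℝ, 0 < t → ∀ N : ℕ,
      ‖exp (-((t : ℂ) • B)) - (1 - partialSum p (N + 1))‖ ≤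
        2 * (1 + K) * (Real.exp (-(t / a N)) + (1 - Real.exp (-(t / a (N + 1))))) := by
  intro t ht N
  obtain ⟨hp1, hp2, hp3⟩ := hp
  have hK0 : 0 ≤ K := (norm_nonneg _).trans (hK 0)
  have hpp : ∀ m n x, p m (p n x) = if m = n then p n x else 0 := by
    intro m n x
    split_ifs with h
    · subst h
      exact DFunLike.congr_fun (hp1 m) x
    · exact DFunLike.congr_fun (hp2 m n h) x
  have hBp : ∀ n x, B (p n x) = (((a n)⁻¹ : ℝ) : ℂ) • p n x := by
    intro n x
    refine tendsto_nhds_unique (hB (p n x)) ?_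
    refine tendsto_const_nhds.congr' ?_
    filter_upwards [eventually_gt_atTop n] with M hM
    simp [hpp, hM]
  set c : ℕ → ℝ := fun n => Real.exp (-(t / a n)) with hc
  have hcm : Monotone c := by
    intro i j hij
    refine Real.exp_le_exp.2 (neg_le_neg ?_)
    exact div_le_div_of_nonneg_left ht.le (hapos i) (ha hij)
  have hc0 : ∀ n, 0 < c n := fun n => Real.exp_pos _
  have hc1 : ∀ n, c n ≤ 1 := fun n =>
    Real.exp_le_one_iff.2 (neg_nonpos.2 (div_pos ht (hapos n)).le)
  have hE : ∀ n x, (exp (-((t : ℂ) • B))) (p n x) = (c n : ℂ) • p n x := by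
    intro n x
    rw [exp_eig _ (((-(t / a n) : ℝ)) : ℂ) (p n x), hc, ← Complex.ofReal_exp]
    simp [hBp, smul_smul, div_eq_mul_inv, -Complex.coe_smul]
  have hPs : ∀ k x, ‖∑ i ∈ Finset.range (k + 1), p i x‖ ≤ K * ‖x‖ := by
    intro k x
    have := (partialSum p (k + 1)).le_of_opNorm_le (hK k) x
    simpa [partialSum] using this
  set T := exp (-((t : ℂ) • B)) - (1 - partialSum p (N + 1)) with hT
  have hT1 : ∀ n < N + 1, ∀ x, T (p n x) = (c n : ℂ) • p n x := by
    intro n hn x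
    simp [hT, hE, partialSum, hpp, hn, -Complex.coe_smul]
  have hT2 : ∀ i x, T (p (N + 1 + i) x) = ((c (N + 1 + i) - 1 : ℝ) : ℂ) • p (N + 1 + i) x := by
    intro i x
    have hni : ¬ (N + 1 + i ≤ N) := by omega
    simp [hT, hE, partialSum, hpp, sub_smul, hni, -Complex.coe_smul]
  have hnn : 0 ≤ c N + (1 - c (N + 1)) := by linarith [hc0 N, hc1 (N + 1)]
  refine ContinuousLinearMap.opNorm_le_bound _ (by positivity) fun x => ?_
  have hlim : Tendsto (fun m => ‖T (∑ n ∈ Finset.range (N + 1 + (m + 1)), p n x)‖) atTop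
      (nhds ‖T x‖) := by
    have h1 : Tendsto (fun m : ℕ => N + 1 + (m + 1)) atTop atTop :=
      tendsto_atTop_mono (fun m => by simp only [id]; omega) tendsto_id
    exact ((T.continuous.tendsto x).comp ((hp3 x).comp h1)).norm
  refine le_of_tendsto' hlim fun m => ?_
  rw [Finset.sum_range_add, map_add, map_sum, map_sum,
    Finset.sum_congr rfl (fun n hn => hT1 n (Finset.mem_range.1 hn) x),
    Finset.sum_congr rfl (fun n _ => hT2 n x)]
  have b1 := abel_bound c hcm (fun n => p n x) (K * ‖x‖) (fun k => hPs k x) N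
  have b2 := abel_bound (fun i => c (N + 1 + i) - 1)
    (fun i j hij => sub_le_sub_right (hcm (by omega)) 1)
    (fun i => p (N + 1 + i) x) (2 * (K * ‖x‖)) (fun k => by
      have e := Finset.sum_range_add (fun n => p n x) (N + 1) (k + 1)
      rw [← sub_eq_iff_eq_add'] at e
      rw [← e]
      refine (norm_sub_le _ _).trans ?_
      have := hPs (N + 1 + k) x
      have := hPs N x
      rw [← add_assoc]
      linarith) m
  refine (norm_add_le _ _).trans ((add_le_add b1 b2).trans ?_)
  rw [abs_of_pos (hc0 N), abs_of_nonpos (by linarith [hc1 (N + 1 + m)])]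
  have hx : 0 ≤ K * ‖x‖ := by positivity
  have e1 : (c N - c 0 + c N) * (K * ‖x‖) ≤ 2 * c N * (K * ‖x‖) :=
    mul_le_mul_of_nonneg_right (by linarith [hc0 0]) hx
  have e2 : 0 ≤ (c N + (1 - c (N + 1))) * ‖x‖ := by positivity
  simp only [add_zero]
  change _ ≤ 2 * (1 + K) * (c N + (1 - c (N + 1))) * ‖x‖
  nlinarith
end

section
/- Let (p_n)_{n≥1} be a Schauder decomposition of a complex Banach space X, let c = (c_n)_{n≥1} be a complex sequence with bounded variation, and let M_c be the associated multiplier operator. Let λ ∈ ℂ be such that dist(λ, closure{c_n : n ≥ 1}) > 0. Then λ I − M_c is invertible in B(X) and (λ I − M_c)^{-1} = M_{d(λ)}, where d(λ) is the bounded-variation sequence d(λ)_n = (λ − c_n)^{-1}. -/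
open Filter Topology NormedSpace

lemma aux_coeff {X : Type*} [NormedAddCommGroup X] [NormedSpace ℂ X]
    (p : ℕ → X →L[ℂ] X) (hp : IsSchauderDecomposition p) (c : ℕ → ℂ) (x y : X)
    (h : Tendsto (fun N => ∑ n ∈ Finset.range N, c n • p n x) atTop (nhds y)) (m : ℕ) :
    p m y = c m • p m x := by
  have h1 := ((p m).continuous.tendsto y).comp h
  refine tendsto_nhds_unique h1 (tendsto_const_nhds.congr' ?_)
  filter_upwards [eventually_gt_atTop m] with N hN
  simp only [Function.comp, map_sum, map_smul]
  rw [Finset.sum_eq_single m]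
  · congr 1
    exact (congrArg (fun T : X →L[ℂ] X => T x) (hp.1 m)).symm
  · intro n _ hn
    have : p m (p n x) = 0 := congrArg (fun T : X →L[ℂ] X => T x) (hp.2.1 m n hn.symm)
    rw [this, smul_zero]
  · intro hm
    exact absurd (Finset.mem_range.2 hN) hm

lemma aux_conv {X : Type*} [NormedAddCommGroup X] [NormedSpace ℂ X] [CompleteSpace X]
    (p : ℕ → X →L[ℂ] X) (hp : IsSchauderDecomposition p)
    (d : ℕ → ℂ) (hd : Summable fun n => ‖d n - d (n + 1)‖) (x : X) :
    ∃ y, Tendsto (fun N => ∑ n ∈ Finset.range N, d n • p n x) atTop (nhds y) := by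
  have hx := hp.2.2 x
  have hcs : CauchySeq d := cauchySeq_of_summable_dist (by simpa [dist_eq_norm] using hd)
  obtain ⟨l, hl⟩ := cauchySeq_tendsto_of_complete hcs
  obtain ⟨B, hB⟩ := (Metric.isBounded_range_of_tendsto _ hx).exists_norm_le
  have hs : Summable fun n => (d (n + 1) - d n) • ∑ i ∈ Finset.range (n + 1), p i x := by
    refine Summable.of_norm_bounded (hd.mul_right B) fun n => ?_
    rw [norm_smul, norm_sub_rev]
    gcongr
    exact hB _ ⟨n + 1, rfl⟩
  refine ⟨l • x - ∑' n, (d (n + 1) - d n) • ∑ i ∈ Finset.range (n + 1), p i x, ?_⟩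
  rw [← tendsto_add_atTop_iff_nat 1]
  have := (hl.smul (hx.comp (tendsto_add_atTop_nat 1))).sub hs.hasSum.tendsto_sum_nat
  refine this.congr fun N => ?_
  rw [Finset.sum_range_by_parts d (fun n => p n x) (N + 1)]
  simp

/-- If `dist(λ, closure{c_n}) > 0`, then `λ I − M_c` is invertible with inverse the
multiplier associated with the bounded-variation sequence `((λ − c_n)⁻¹)_n`. -/
theorem statement14 {X : Type*} [NormedAddCommGroup X] [NormedSpace ℂ X] [CompleteSpace X]
    (p : ℕ → X →L[ℂ] X) (hp : IsSchauderDecomposition p)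
    (c : ℕ → ℂ) (hbv : Summable fun n => ‖c n - c (n + 1)‖)
    (M : X →L[ℂ] X)
    (hM : ∀ x : X, Tendsto (fun N => ∑ n ∈ Finset.range N, c n • p n x) atTop (nhds (M x)))
    (lam : ℂ) (hlam : 0 < Metric.infDist lam (closure (Set.range c))) :
    IsUnit (lam • (1 : X →L[ℂ] X) - M) ∧
    Summable (fun n => ‖(lam - c n)⁻¹ - (lam - c (n + 1))⁻¹‖) ∧
    ∀ x : X, Tendsto (fun N => ∑ n ∈ Finset.range N, (lam - c n)⁻¹ • p n x)
      atTop (nhds (Ring.inverse (lam • (1 : X →L[ℂ] X) - M) x)) := by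
  have hδ : ∀ n, Metric.infDist lam (closure (Set.range c)) ≤ ‖lam - c n‖ := fun n => by
    rw [← dist_eq_norm]
    exact Metric.infDist_le_dist_of_mem (subset_closure ⟨n, rfl⟩)
  set δ := Metric.infDist lam (closure (Set.range c)) with hδd
  have hne : ∀ n, lam - c n ≠ 0 := fun n => norm_pos_iff.1 (hlam.trans_le (hδ n))
  have hd : Summable (fun n => ‖(lam - c n)⁻¹ - (lam - c (n + 1))⁻¹‖) := by
    refine Summable.of_nonneg_of_le (fun _ => norm_nonneg _) (fun n => ?_) (hbv.div_const (δ * δ))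
    rw [inv_sub_inv (hne n) (hne (n + 1)), norm_div, norm_mul]
    have : lam - c (n + 1) - (lam - c n) = c n - c (n + 1) := by ring
    rw [this]
    gcongr
    · exact hδ n
    · exact hδ (n + 1)
  choose D hD using aux_conv p hp (fun n => (lam - c n)⁻¹) hd
  let g : ℕ → X →L[ℂ] X := fun N => ∑ n ∈ Finset.range N, (lam - c n)⁻¹ • p n
  have hg : Tendsto (fun N x => g N x) atTop (nhds D) := by
    rw [tendsto_pi_nhds]
    intro x
    refine (hD x).congr fun N => ?_
    simp [g]
  let T : X →L[ℂ] X := continuousLinearMapOfTendsto g hg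
  have hT : ∀ x, T x = D x := fun x => rfl
  have h1 : T * (lam • (1 : X →L[ℂ] X) - M) = 1 := by
    ext x
    refine tendsto_nhds_unique (hD (lam • x - M x)) ((hp.2.2 x).congr fun N => ?_)
    refine Finset.sum_congr rfl fun n _ => ?_
    rw [map_sub, map_smul, aux_coeff p hp c x _ (hM x), ← sub_smul, smul_smul,
      inv_mul_cancel₀ (hne n), one_smul]
  have h2 : (lam • (1 : X →L[ℂ] X) - M) * T = 1 := by
    ext x
    have h3 : Tendsto (fun N => lam • ∑ n ∈ Finset.range N, p n (D x)
        - ∑ n ∈ Finset.range N, c n • p n (D x)) atTop (nhds (lam • D x - M (D x))) :=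
      ((hp.2.2 (D x)).const_smul lam).sub (hM (D x))
    refine tendsto_nhds_unique h3 ((hp.2.2 x).congr fun N => ?_)
    rw [Finset.smul_sum, ← Finset.sum_sub_distrib]
    refine Finset.sum_congr rfl fun n _ => ?_
    rw [aux_coeff p hp _ x _ (hD x), ← sub_smul, smul_smul, mul_inv_cancel₀ (hne n), one_smul]
  let u : (X →L[ℂ] X)ˣ := ⟨lam • (1 : X →L[ℂ] X) - M, T, h2, h1⟩
  have hu : Ring.inverse (lam • (1 : X →L[ℂ] X) - M) = T := Ring.inverse_unit u
  refine ⟨⟨u, rfl⟩, hd, fun x => ?_⟩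
  rw [hu]
  exact hD x
end
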